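/- Let G = ℤ/4 and let s : ℤ/4 → ℤ/2 be the reduction homomorphism. Define ψ₀ : G × G → ℂˣ by ψ₀(a, b) = -1 if a' + b' ≥ 4 and ψ₀(a, b) = 1 otherwise, where a', b' ∈ {0, 1, 2, 3} denote the integer representatives of a, b ∈ ℤ/4. Then: ψ₀ is a twisted 2-cocycle with respect to s; ψ₀ is not a twisted 2-coboundary; and every twisted 2-cocycle on G with respect to s is cohomologous to the constant function 1 or to ψ₀. (Equivalently, the twisted cohomology group H²(ℤ₄ᵀ, ℂˣ_T) has exactly two elements, so there are exactly two ℤ₄ᵀ-SPT phases; ψ₀ is the class with T⁴ = -1 in the twisted group algebra.) -/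

import Mathlib

noncomputable section

/-- Complex conjugation on the group of units `ℂˣ`. -/
def conjUnits : ℂˣ →* ℂˣ := Units.map (starRingEnd ℂ).toMonoidHom

/-- The reduction homomorphism `s : ℤ/4 → ℤ/2`. -/
def s : ZMod 4 → ZMod 2 := ZMod.castHom (show 2 ∣ 4 by norm_num) (ZMod 2)

/-- The twisted action of `g ∈ ℤ/4` on `ℂˣ`: trivial if `s g = 0`, complex conjugation
otherwise. -/
def tAct (g : ZMod 4) (z : ℂˣ) : ℂˣ := if s g = 0 then z else conjUnits z

/-- Twisted 2-cocycle condition on `ℤ/4` with respect to `s`. -/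
def IsTwisted2Cocycle (ψ : ZMod 4 → ZMod 4 → ℂˣ) : Prop :=
  ∀ g₁ g₂ g₃,
    tAct g₁ (ψ g₂ g₃) * ψ g₁ (g₂ + g₃) = ψ (g₁ + g₂) g₃ * ψ g₁ g₂

/-- Twisted 2-coboundary condition on `ℤ/4` with respect to `s`. -/
def IsTwisted2Coboundary (ψ : ZMod 4 → ZMod 4 → ℂˣ) : Prop :=
  ∃ β : ZMod 4 → ℂˣ, ∀ g₁ g₂,
    ψ g₁ g₂ = tAct g₁ (β g₂) * (β (g₁ + g₂))⁻¹ * β g₁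

/-- Two twisted 2-cochains are cohomologous if their pointwise quotient is a twisted
2-coboundary. -/
def Cohomologous (ψ ψ' : ZMod 4 → ZMod 4 → ℂˣ) : Prop :=
  IsTwisted2Coboundary fun g₁ g₂ => ψ g₁ g₂ * (ψ' g₁ g₂)⁻¹

/-- The nontrivial `ℤ₄ᵀ`-SPT cocycle: `ψ₀(a, b) = -1` if the integer representatives
satisfy `a' + b' ≥ 4`, and `1` otherwise. -/
def ψ₀ : ZMod 4 → ZMod 4 → ℂˣ := fun a b =>
  if 4 ≤ a.val + b.val then -1 else 1

/-!
For a finite cyclic group `G = ⟨g⟩` acting on an abelian group `M`, a 2-cocycle `f` describes a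
twisted group algebra with basis elements `e a` and `e a * e b = f (a, b) • e (a * b)`. The power
`e g ^ |G|` is the scalar `∏ a, f (a, g)`, which is `G`-invariant. Rescaling the basis multiplies it
by a norm `∏ a, a • c`, and `f` is a coboundary exactly when this scalar is itself a norm. If `g`
acts on `ℂˣ` by complex conjugation, then the invariants are the nonzero reals and the norms are the
positive reals, so only the sign of the scalar matters.
-/

open groupCohomology Multiplicative

section Cocycle

variable {G M : Type*} [Group G] [CommGroup M] [MulDistribMulAction G M] {f f' : G × G → M} {g : G}

theorem isMulCocycle₂_div (hf : IsMulCocycle₂ f) (hf' : IsMulCocycle₂ f') :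
    IsMulCocycle₂ (f / f') := fun a b c => by
  simp only [Pi.div_apply, smul_div', div_mul_div_comm, hf a b c, hf' a b c]

theorem isMulCocycle₂_of_isMulCoboundary₂ (hf : IsMulCoboundary₂ f) : IsMulCocycle₂ f := by
  obtain ⟨β, hβ⟩ := hf
  intro a b c
  simp only [← hβ, smul_mul', smul_div', mul_smul, mul_assoc a b c]
  apply Additive.ofMul.injective
  simp only [ofMul_mul, ofMul_div]
  abel

theorem apply_eq_one_of_isMulCocycle₂ (hg : ∀ x, x ∈ Subgroup.zpowers g)
    (hf : IsMulCocycle₂ f) (hfg : ∀ a, f (a, g) = 1) (a b : G) : f (a, b) = 1 := by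
  have apply_mul_generator (b : G) : f (a, b * g) = f (a, b) := by
    simpa [hfg] using (hf a b g).symm
  have apply_one : f (a, 1) = 1 := by simpa [hfg] using (apply_mul_generator 1).symm
  obtain ⟨k, rfl⟩ := Subgroup.mem_zpowers_iff.mp (hg b)
  refine zpow_induction_right (P := fun b => f (a, b) = 1) apply_one (fun b hb => ?_)
    (fun b hb => ?_) k
  · rw [apply_mul_generator, hb]
  · rw [← apply_mul_generator, inv_mul_cancel_right, hb]

end Cocycle

section Cyclic

variable {G M : Type*} [Group G] [Fintype G] [CommMonoid M] {g : G}

theorem prod_range_orderOf_pow (hg : ∀ x, x ∈ Subgroup.zpowers g) (r : G → M) :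
    ∏ i ∈ Finset.range (orderOf g), r (g ^ i) = ∏ a, r a := by
  classical
  rw [← IsCyclic.image_range_orderOf hg, Finset.prod_image]
  simpa [Finset.coe_range] using pow_injOn_Iio_orderOf

theorem exists_apply_mul_generator_eq (hg : ∀ x, x ∈ Subgroup.zpowers g) {r : G → M}
    (hr : ∏ a, r a = 1) (m : M) : ∃ β : G → M, β 1 = m ∧ ∀ a, β (a * g) = β a * r a := by
  let P (k : ℕ) : M := m * ∏ i ∈ Finset.range k, r (g ^ i)
  have periodic : Function.Periodic P (orderOf g) := fun k => by
    simp [P, add_comm k, Finset.prod_range_add, pow_add, prod_range_orderOf_pow hg, hr]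
  have factors : P.FactorsThrough (g ^ ·) := fun k l hkl => by
    rw [← periodic.map_mod_nat k, ← periodic.map_mod_nat l, pow_inj_mod.mp hkl]
  obtain ⟨β, hβ⟩ : ∃ β : G → M, ∀ k, β (g ^ k) = P k :=
    ⟨Function.extend (g ^ ·) P 1, factors.extend_apply 1⟩
  refine ⟨β, by simpa [P] using hβ 0, fun a => ?_⟩
  obtain ⟨k, rfl⟩ := mem_powers_iff_mem_zpowers.mpr (hg a)
  calc β (g ^ k * g) = P (k + 1) := by rw [← pow_succ, hβ]
    _ = P k * r (g ^ k) := by simp only [P, Finset.prod_range_succ, mul_assoc]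
    _ = β (g ^ k) * r (g ^ k) := by rw [hβ]

end Cyclic

/-- The scalar `e g ^ |G|` of the twisted group algebra of `f`, when `g` generates `G`: right
multiplication by `e g` sends `e a` to `f (a, g) • e (a * g)`. -/
def generatorPow {G M : Type*} [Fintype G] [CommMonoid M] (g : G) (f : G × G → M) : M :=
  ∏ a, f (a, g)

theorem generatorPow_div {G M : Type*} [Fintype G] [CommGroup M] (g : G) (f f' : G × G → M) :
    generatorPow g (f / f') = generatorPow g f / generatorPow g f' :=
  Finset.prod_div_distrib _ _

section Obstruction

variable {G M : Type*} [Group G] [Fintype G] [CommGroup M] [MulDistribMulAction G M]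
  {f : G × G → M} {g : G}

theorem smul_generatorPow (hf : IsMulCocycle₂ f) (b g : G) :
    b • generatorPow g f = generatorPow g f := by
  have smul_apply (a : G) : b • f (a, g) = f (b * a, g) * (f (b, a) / f (b, a * g)) := by
    rw [← mul_div_assoc, hf b a g, mul_div_cancel_right]
  have prod_left : ∏ a, f (b * a, g) = ∏ a, f (a, g) :=
    Fintype.prod_equiv (Equiv.mulLeft b) _ _ fun _ => rfl
  have prod_right : ∏ a, f (b, a * g) = ∏ a, f (b, a) :=
    Fintype.prod_equiv (Equiv.mulRight g) _ _ fun _ => rfl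
  simp only [generatorPow, Finset.smul_prod', smul_apply, Finset.prod_mul_distrib,
    Finset.prod_div_distrib, prod_left, prod_right, div_self', mul_one]

theorem generatorPow_eq_prod_smul {β : G → M} (hβ : ∀ a b : G, a • β b / β (a * b) * β a = f (a, b))
    (g : G) : generatorPow g f = ∏ a : G, a • β g := by
  have prod_shift : ∏ a, β (a * g) = ∏ a, β a :=
    Fintype.prod_equiv (Equiv.mulRight g) _ _ fun _ => rfl
  simp only [generatorPow, ← hβ, Finset.prod_mul_distrib, Finset.prod_div_distrib, prod_shift,
    div_mul_cancel]

theorem isMulCoboundary₂_iff_exists_prod_smul_eq (hg : ∀ x, x ∈ Subgroup.zpowers g)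
    (hf : IsMulCocycle₂ f) : IsMulCoboundary₂ f ↔ ∃ c : M, ∏ a : G, a • c = generatorPow g f := by
  refine ⟨fun ⟨β, hβ⟩ => ⟨β g, (generatorPow_eq_prod_smul hβ g).symm⟩, fun ⟨c, hc⟩ => ?_⟩
  -- Rescaling the basis by `β`, with `β g = c`, turns every `f (a, g)` into `1`.
  obtain ⟨β, hβ_one, hβ⟩ := exists_apply_mul_generator_eq hg (r := fun a => a • c / f (a, g))
    (by rw [Finset.prod_div_distrib, hc, generatorPow, div_self']) (f (1, g))
  have hβg : β g = c := by simpa [hβ_one] using hβ 1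
  let dβ (p : G × G) : M := p.1 • β p.2 / β (p.1 * p.2) * β p.1
  have hdβ : IsMulCocycle₂ dβ := isMulCocycle₂_of_isMulCoboundary₂ ⟨β, fun _ _ => rfl⟩
  have quotient_apply_generator (a : G) : (f / dβ) (a, g) = 1 := by
    rw [Pi.div_apply, div_eq_one]
    simp only [dβ, hβg, hβ, mul_comm (β a), div_mul_eq_div_div, div_div_cancel, div_mul_cancel]
  exact ⟨β, fun a b => (div_eq_one.mp <|
    apply_eq_one_of_isMulCocycle₂ hg (isMulCocycle₂_div hf hdβ) quotient_apply_generator a b).symm⟩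

end Obstruction

section Carry

variable {M : Type*} [CommMonoid M] {n : ℕ}

/-- The cochain on `ℤ/n` whose value at `(a, b)` is `u` if adding the representatives of `a` and `b`
in `{0, …, n - 1}` produces a carry, and `1` otherwise. The group is written multiplicatively to
agree with `IsMulCocycle₂`. -/
def carryCochain (u : M) : Multiplicative (ZMod n) × Multiplicative (ZMod n) → M :=
  fun p => u ^ ((p.1.toAdd.val + p.2.toAdd.val) / n)

theorem val_add_div_cocycle (a b c : ZMod n) :
    ((a + b).val + c.val) / n + (a.val + b.val) / n =
      (b.val + c.val) / n + (a.val + (b + c).val) / n := by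
  rcases Nat.eq_zero_or_pos n with rfl | hn
  · simp
  have : NeZero n := ⟨hn.ne'⟩
  -- Both sides count the carries in `a + b + c`, that is, they equal `(a.val + b.val + c.val) / n`.
  have div_add_mod (x y : ℕ) : (x % n + y) / n + x / n = (x + y) / n := by
    conv_rhs => rw [← Nat.mod_add_div x n, add_right_comm, Nat.add_mul_div_left _ _ hn]
  rw [ZMod.val_add, ZMod.val_add, div_add_mod, add_comm ((_ + _) / n), add_comm a.val (_ % n),
    div_add_mod]
  congr 1
  ring

theorem isMulCocycle₂_carryCochain {A : Type*} [CommGroup A]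
    [MulDistribMulAction (Multiplicative (ZMod n)) A] {u : A}
    (hu : ∀ a : Multiplicative (ZMod n), a • u = u) : IsMulCocycle₂ (carryCochain (n := n) u) := by
  intro a b c
  simp only [carryCochain, smul_pow', hu, ← pow_add, toAdd_mul]
  rw [val_add_div_cocycle]

theorem generatorPow_carryCochain [NeZero n] (hn : 1 < n) (u : M) :
    generatorPow (ofAdd 1) (carryCochain (n := n) u) = u := by
  have : Fact (1 < n) := ⟨hn⟩
  obtain ⟨m, rfl⟩ := Nat.exists_eq_add_of_lt hn
  have val_last : (-1 : ZMod (1 + m + 1)).val = 1 + m := ZMod.val_neg_one (1 + m)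
  rw [generatorPow, Fintype.prod_eq_single (ofAdd (-1))]
  · simp [carryCochain, ZMod.val_one, val_last]
  · intro a ha
    have val_ne : a.toAdd.val ≠ 1 + m := fun h => ha (ZMod.val_injective _ (h.trans val_last.symm))
    have val_lt := ZMod.val_lt a.toAdd
    rw [carryCochain, toAdd_ofAdd, ZMod.val_one, Nat.div_eq_of_lt (by lia), pow_zero]

end Carry

theorem mem_zpowers_ofAdd_one {n : ℕ} (x : Multiplicative (ZMod n)) :
    x ∈ Subgroup.zpowers (ofAdd (1 : ZMod n)) := by
  obtain ⟨k, hk⟩ := ZMod.intCast_surjective x.toAdd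
  exact ⟨k, by simp [← ofAdd_zsmul, hk]⟩

theorem conjUnits_eq_self_iff {u : ℂˣ} : conjUnits u = u ↔ ((u : ℂ).re : ℂ) = u := by
  rw [← Complex.conj_eq_iff_re, Units.ext_iff]
  rfl

theorem re_ne_zero_of_conjUnits_eq_self {u : ℂˣ} (hu : conjUnits u = u) : (u : ℂ).re ≠ 0 := by
  intro hre
  exact u.ne_zero (by rw [← conjUnits_eq_self_iff.mp hu, hre, Complex.ofReal_zero])

theorem conjUnits_conjUnits (z : ℂˣ) : conjUnits (conjUnits z) = z :=
  Units.ext (Complex.conj_conj (z : ℂ))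

theorem val_mul_conjUnits (c : ℂˣ) : ((c * conjUnits c : ℂˣ) : ℂ) = Complex.normSq c :=
  Complex.mul_conj (c : ℂ)

section Conjugation

variable {G : Type*} [Group G] [MulDistribMulAction G ℂˣ] {g : G}

theorem pow_two_mul_smul_of_smul_eq_conj (hconj : ∀ z, g • z = conjUnits z) (k : ℕ) (z : ℂˣ) :
    g ^ (2 * k) • z = z := by
  have sq_smul (z : ℂˣ) : g ^ 2 • z = z := by
    rw [pow_two, mul_smul, hconj, hconj, conjUnits_conjUnits]
  induction k with
  | zero => simp
  | succ k ih => rw [mul_add_one, pow_add, mul_smul, sq_smul, ih]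

theorem pow_two_mul_add_one_smul_of_smul_eq_conj (hconj : ∀ z, g • z = conjUnits z) (k : ℕ)
    (z : ℂˣ) : g ^ (2 * k + 1) • z = conjUnits z := by
  rw [pow_succ, mul_smul, hconj, pow_two_mul_smul_of_smul_eq_conj hconj]

theorem even_orderOf_of_smul_eq_conj (hconj : ∀ z, g • z = conjUnits z) : Even (orderOf g) := by
  by_contra hodd
  obtain ⟨k, hk⟩ := Nat.not_even_iff_odd.mp hodd
  let I : ℂˣ := Units.mk0 Complex.I Complex.I_ne_zero
  have conj_I : conjUnits I = I := by
    rw [← pow_two_mul_add_one_smul_of_smul_eq_conj hconj k, ← hk, pow_orderOf_eq_one, one_smul]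
  exact re_ne_zero_of_conjUnits_eq_self conj_I Complex.I_re

theorem smul_eq_self_of_conjUnits_eq_self (hg : ∀ x, x ∈ Subgroup.zpowers g)
    (hconj : ∀ z, g • z = conjUnits z) {u : ℂˣ} (hu : conjUnits u = u) (a : G) : a • u = u := by
  have g_mem : g ∈ MulAction.stabilizer G u := (hconj u).trans hu
  exact Subgroup.zpowers_le.mpr g_mem (hg a)

variable [Fintype G]

theorem exists_prod_smul_eq_pow (hg : ∀ x, x ∈ Subgroup.zpowers g)
    (hconj : ∀ z, g • z = conjUnits z) (c : ℂˣ) :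
    ∃ m : ℕ, ∏ a : G, a • c = (c * conjUnits c) ^ m := by
  obtain ⟨m, hm⟩ := (even_orderOf_of_smul_eq_conj hconj).two_dvd
  have prod_range_pow_smul (k : ℕ) :
      ∏ i ∈ Finset.range (2 * k), g ^ i • c = (c * conjUnits c) ^ k := by
    induction k with
    | zero => simp
    | succ k ih =>
      rw [mul_add_one, Finset.prod_range_succ, Finset.prod_range_succ, ih,
        pow_two_mul_smul_of_smul_eq_conj hconj, pow_two_mul_add_one_smul_of_smul_eq_conj hconj,
        mul_assoc, pow_succ]
  exact ⟨m, by rw [← prod_range_orderOf_pow hg fun a => a • c, hm, prod_range_pow_smul]⟩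

theorem exists_prod_smul_eq_iff_re_pos (hg : ∀ x, x ∈ Subgroup.zpowers g)
    (hconj : ∀ z, g • z = conjUnits z) {u : ℂˣ} (hu : conjUnits u = u) :
    (∃ c : ℂˣ, ∏ a : G, a • c = u) ↔ 0 < (u : ℂ).re := by
  constructor
  · rintro ⟨c, rfl⟩
    obtain ⟨m, hm⟩ := exists_prod_smul_eq_pow hg hconj c
    rw [hm, Units.val_pow_eq_pow_val, val_mul_conjUnits, ← Complex.ofReal_pow, Complex.ofReal_re]
    exact pow_pos (Complex.normSq_pos.mpr c.ne_zero) m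
  · intro hpos
    obtain ⟨x, hx, hxu⟩ : ∃ x : ℝ, 0 < x ∧ x ^ Fintype.card G = (u : ℂ).re :=
      ⟨_, Real.rpow_pos_of_pos hpos _, Real.rpow_inv_natCast_pow hpos.le Fintype.card_ne_zero⟩
    let c : ℂˣ := Units.mk0 (x : ℂ) (Complex.ofReal_ne_zero.mpr hx.ne')
    have conj_c : conjUnits c = c := conjUnits_eq_self_iff.mpr rfl
    refine ⟨c, ?_⟩
    simp only [smul_eq_self_of_conjUnits_eq_self hg hconj conj_c, Finset.prod_const,
      Finset.card_univ]
    ext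
    rw [← conjUnits_eq_self_iff.mp hu, ← hxu, Complex.ofReal_pow]
    rfl

theorem isMulCoboundary₂_iff_re_generatorPow_pos {f : G × G → ℂˣ}
    (hg : ∀ x, x ∈ Subgroup.zpowers g) (hconj : ∀ z, g • z = conjUnits z) (hf : IsMulCocycle₂ f) :
    IsMulCoboundary₂ f ↔ 0 < ((generatorPow g f : ℂˣ) : ℂ).re := by
  rw [isMulCoboundary₂_iff_exists_prod_smul_eq hg hf, exists_prod_smul_eq_iff_re_pos hg hconj]
  rw [← hconj, smul_generatorPow hf]

end Conjugation

theorem H2_Z4T_general {n : ℕ} [NeZero n] [MulDistribMulAction (Multiplicative (ZMod n)) ℂˣ]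
    (hconj : ∀ z : ℂˣ, ofAdd (1 : ZMod n) • z = conjUnits z) :
    IsMulCocycle₂ (carryCochain (n := n) (-1 : ℂˣ)) ∧
      ¬ IsMulCoboundary₂ (carryCochain (n := n) (-1 : ℂˣ)) ∧
      ∀ f : Multiplicative (ZMod n) × Multiplicative (ZMod n) → ℂˣ, IsMulCocycle₂ f →
        IsMulCoboundary₂ f ∨ IsMulCoboundary₂ (f / carryCochain (-1)) := by
  have hg := mem_zpowers_ofAdd_one (n := n)
  have even_n : Even n := by
    simpa [orderOf_ofAdd_eq_addOrderOf, ZMod.addOrderOf_one]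
      using even_orderOf_of_smul_eq_conj hconj
  have one_lt : 1 < n := by grind [NeZero.ne n]
  have cocycle : IsMulCocycle₂ (carryCochain (n := n) (-1 : ℂˣ)) :=
    isMulCocycle₂_carryCochain <|
      smul_eq_self_of_conjUnits_eq_self hg hconj (by ext; simp [conjUnits])
  have pow_carry := generatorPow_carryCochain one_lt (-1 : ℂˣ)
  refine ⟨cocycle, ?_, fun f hf => ?_⟩
  · rw [isMulCoboundary₂_iff_re_generatorPow_pos hg hconj cocycle, pow_carry]
    norm_num
  · rw [isMulCoboundary₂_iff_re_generatorPow_pos hg hconj hf,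
      isMulCoboundary₂_iff_re_generatorPow_pos hg hconj (isMulCocycle₂_div hf cocycle),
      generatorPow_div, pow_carry]
    have re_ne : ((generatorPow (ofAdd 1) f : ℂˣ) : ℂ).re ≠ 0 :=
      re_ne_zero_of_conjUnits_eq_self (by rw [← hconj, smul_generatorPow hf])
    simpa [div_neg] using re_ne.lt_or_gt.symm

section Z4

theorem s_add (a b : ZMod 4) : s (a + b) = s a + s b :=
  map_add (ZMod.castHom (show 2 ∣ 4 by norm_num) (ZMod 2)) a b

theorem tAct_zero (z : ℂˣ) : tAct 0 z = z :=
  if_pos (map_zero (ZMod.castHom (show 2 ∣ 4 by norm_num) (ZMod 2)))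

theorem tAct_add (a b : ZMod 4) (z : ℂˣ) : tAct (a + b) z = tAct a (tAct b z) := by
  have add_eq_zero_iff : ∀ x y : ZMod 2, x + y = 0 ↔ (x = 0 ↔ y = 0) := by decide
  by_cases ha : s a = 0 <;> by_cases hb : s b = 0 <;>
    simp [tAct, s_add, add_eq_zero_iff, ha, hb, conjUnits_conjUnits]

theorem tAct_mul (a : ZMod 4) (z w : ℂˣ) : tAct a (z * w) = tAct a z * tAct a w := by
  unfold tAct
  split_ifs <;> simp

theorem tAct_one (a : ZMod 4) : tAct a 1 = 1 := by
  unfold tAct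
  split_ifs <;> simp

/-- The action `tAct`, in the form used by Mathlib's multiplicative group cohomology. -/
instance tActAction : MulDistribMulAction (Multiplicative (ZMod 4)) ℂˣ where
  smul a z := tAct a.toAdd z
  one_smul z := tAct_zero z
  mul_smul a b z := tAct_add a.toAdd b.toAdd z
  smul_mul a z w := tAct_mul a.toAdd z w
  smul_one a := tAct_one a.toAdd

theorem ofAdd_one_smul_eq_conjUnits (z : ℂˣ) : ofAdd (1 : ZMod 4) • z = conjUnits z := by
  have s_one : s 1 ≠ 0 := by unfold s; decide
  change tAct 1 z = _
  rw [tAct, if_neg s_one]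

/-- A cochain on `ℤ/4`, in the form used by Mathlib's multiplicative group cohomology. -/
def toMulCochain (ψ : ZMod 4 → ZMod 4 → ℂˣ) :
    Multiplicative (ZMod 4) × Multiplicative (ZMod 4) → ℂˣ :=
  fun p => ψ p.1.toAdd p.2.toAdd

theorem isTwisted2Cocycle_iff (ψ : ZMod 4 → ZMod 4 → ℂˣ) :
    IsTwisted2Cocycle ψ ↔ IsMulCocycle₂ (toMulCochain ψ) :=
  forall₃_congr fun _ _ _ => eq_comm

theorem isTwisted2Coboundary_iff (ψ : ZMod 4 → ZMod 4 → ℂˣ) :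
    IsTwisted2Coboundary ψ ↔ IsMulCoboundary₂ (toMulCochain ψ) := by
  simp only [IsTwisted2Coboundary, ← div_eq_mul_inv]
  exact exists_congr fun _ => forall₂_congr fun _ _ => eq_comm

theorem cohomologous_iff (ψ ψ' : ZMod 4 → ZMod 4 → ℂˣ) :
    Cohomologous ψ ψ' ↔ IsMulCoboundary₂ (toMulCochain ψ / toMulCochain ψ') := by
  simp only [Cohomologous, ← div_eq_mul_inv]
  exact isTwisted2Coboundary_iff _

theorem toMulCochain_ψ₀ : toMulCochain ψ₀ = carryCochain (-1) := by
  ext1 ⟨a, b⟩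
  have ha := ZMod.val_lt a.toAdd
  have hb := ZMod.val_lt b.toAdd
  simp only [toMulCochain, ψ₀, carryCochain]
  split_ifs with carry
  · rw [show (a.toAdd.val + b.toAdd.val) / 4 = 1 by lia, pow_one]
  · rw [Nat.div_eq_of_lt (by lia), pow_zero]

end Z4

/-- `H²(ℤ₄ᵀ, ℂˣ_T)` has exactly two elements: `ψ₀` is a twisted 2-cocycle, it is not a
twisted 2-coboundary, and every twisted 2-cocycle on `ℤ/4` is cohomologous to `1` or
to `ψ₀`. -/
theorem H2_Z4T :
    IsTwisted2Cocycle ψ₀ ∧ ¬ IsTwisted2Coboundary ψ₀ ∧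
      ∀ ψ, IsTwisted2Cocycle ψ →
        Cohomologous ψ (fun _ _ => 1) ∨ Cohomologous ψ ψ₀ := by
  have toMulCochain_one : toMulCochain (fun _ _ => 1) = 1 := rfl
  simp only [isTwisted2Cocycle_iff, isTwisted2Coboundary_iff, cohomologous_iff,
    toMulCochain_one, div_one, toMulCochain_ψ₀]
  have h := H2_Z4T_general ofAdd_one_smul_eq_conjUnits
  exact ⟨h.1, h.2.1, fun ψ => h.2.2 (toMulCochain ψ)⟩

end
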